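/- Let k be a positive integer, let G be a finite simple graph, let P = (X_1,…,X_l) be a path decomposition of G in which every bag has size at most k, and let S be a nonempty subset of V(G). Then the number of S-branches H such that S ⊆ X_{a(H)} and S ⊄ X_{b(H)} is at most k. -/

import Mathlib

/-!
Among the sets `C` of the family choose one whose first index `a(C)` is largest, and call that index
`m`; then `S ⊆ X m`. If some member `C` had `b(C) < m`, the bag `X (b(C))` would lie between
`X (a(C))` and `X m`, which both contain `S`, so it would contain `S` too. Hence
`a(C) ≤ m ≤ b(C)` for every member `C`, and as the bags meeting a connected set form an interval,
every `C` has a vertex in `X m`. Since the members are disjoint, there are at most as many of them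
as vertices in `X m`. For branches, disjointness holds because they are components of `G - S`.
-/

open SimpleGraph

variable {V : Type*}

/-- `N_G(Y)`: the set of vertices outside `Y` having a neighbor in `Y`. -/
def nbhdSet (G : SimpleGraph V) (Y : Set V) : Set V :=
  {v | v ∉ Y ∧ ∃ u ∈ Y, G.Adj u v}

/-- `C` is a connected component of the subgraph of `G` induced by `U`. -/
def IsCompIn (G : SimpleGraph V) (U C : Set V) : Prop :=
  C.Nonempty ∧ C ⊆ U ∧ (G.induce C).Connected ∧
    ∀ u ∈ C, ∀ v ∈ U, G.Adj u v → v ∈ C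

/-- `C` is a connected component of `G - S`. -/
def IsCompOf (G : SimpleGraph V) (S C : Set V) : Prop :=
  IsCompIn G Sᶜ C

/-- `C` is an `S`-branch: a connected component of `G - S` with `N_G(C) = S`. -/
def IsBranch (G : SimpleGraph V) (S C : Set V) : Prop :=
  IsCompOf G S C ∧ nbhdSet G C = S

/-- `S` is a bottleneck (for the width parameter `k`): a nonempty set with
at least `2k+1` `S`-branches. -/
def IsBottleneck (G : SimpleGraph V) (k : ℕ) (S : Set V) : Prop :=
  S.Nonempty ∧ 2 * k + 1 ≤ {C : Set V | IsBranch G S C}.ncard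

/-- `(X 0, …, X (l-1))` is a path decomposition of `G`. -/
def IsPathDecomp (G : SimpleGraph V) (l : ℕ) (X : ℕ → Set V) : Prop :=
  (∀ v, ∃ i < l, v ∈ X i) ∧
  (∀ u v, G.Adj u v → ∃ i < l, u ∈ X i ∧ v ∈ X i) ∧
  (∀ i j m, i ≤ j → j ≤ m → m < l → X i ∩ X m ⊆ X j)

/-- The width of a path decomposition: the maximum bag size minus one. -/
noncomputable def pdWidth (l : ℕ) (X : ℕ → Set V) : ℕ :=
  ((Finset.range l).sup fun i => (X i).ncard) - 1

/-- The set of indices of bags meeting the vertex set `C`. -/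
def supp (l : ℕ) (X : ℕ → Set V) (C : Set V) : Set ℕ :=
  {t | t < l ∧ (C ∩ X t).Nonempty}

/-- `a(C)`: the first index of a bag meeting `C`. -/
noncomputable def firstIdx (l : ℕ) (X : ℕ → Set V) (C : Set V) : ℕ :=
  sInf (supp l X C)

/-- `b(C)`: the last index of a bag meeting `C`. -/
noncomputable def lastIdx (l : ℕ) (X : ℕ → Set V) (C : Set V) : ℕ :=
  sSup (supp l X C)

/-- `C` is an in-branch of `S` with respect to the decomposition:
an `S`-branch with `S ⊆ X (a C)` and `S ⊆ X (b C)`. -/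
def IsInBranch (G : SimpleGraph V) (l : ℕ) (X : ℕ → Set V) (S C : Set V) : Prop :=
  IsBranch G S C ∧ S ⊆ X (firstIdx l X C) ∧ S ⊆ X (lastIdx l X C)

/-- `α(S)`: the minimum of `a(H)` over in-branches `H` of `S`. -/
noncomputable def botStart (G : SimpleGraph V) (l : ℕ) (X : ℕ → Set V) (S : Set V) : ℕ :=
  sInf {i | ∃ C, IsInBranch G l X S C ∧ i = firstIdx l X C}

/-- `β(S)`: the maximum of `b(H)` over in-branches `H` of `S`. -/
noncomputable def botEnd (G : SimpleGraph V) (l : ℕ) (X : ℕ → Set V) (S : Set V) : ℕ :=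
  sSup {i | ∃ C, IsInBranch G l X S C ∧ i = lastIdx l X C}

/-- The interval `I(S,P) = [α(S), β(S)]` of a bottleneck `S`. -/
noncomputable def botInterval (G : SimpleGraph V) (l : ℕ) (X : ℕ → Set V) (S : Set V) : Set ℕ :=
  Set.Icc (botStart G l X S) (botEnd G l X S)

/-- A pre-branch of `S`. -/
def IsPreBranch (G : SimpleGraph V) (l : ℕ) (X : ℕ → Set V) (S C : Set V) : Prop :=
  IsBranch G S C ∧ ¬ IsInBranch G l X S C ∧ firstIdx l X C < botStart G l X S

/-- A post-branch of `S`. -/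
def IsPostBranch (G : SimpleGraph V) (l : ℕ) (X : ℕ → Set V) (S C : Set V) : Prop :=
  IsBranch G S C ∧ ¬ IsInBranch G l X S C ∧
    botStart G l X S ≤ firstIdx l X C ∧ botEnd G l X S < lastIdx l X C

/-- `C` waits in the interval `[i, j]` of the decomposition. -/
def WaitsIn (X : ℕ → Set V) (C : Set V) (i j : ℕ) : Prop :=
  ∀ t, i ≤ t → t ≤ j → C ∩ X t = C ∩ X i

/-- The decomposition is `S`-structured: every component of `G - S` that is not an
`S`-branch, and every pre- or post-branch of `S`, waits in `I(S,P)`. -/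
def IsStructured (G : SimpleGraph V) (l : ℕ) (X : ℕ → Set V) (S : Set V) : Prop :=
  ∀ C : Set V,
    ((IsCompOf G S C ∧ ¬ IsBranch G S C) ∨ IsPreBranch G l X S C ∨ IsPostBranch G l X S C) →
    WaitsIn X C (botStart G l X S) (botEnd G l X S)

/-- The decomposition is `I`-connected: every connected component of the subgraph
induced by any prefix of bags contains a vertex of `I`. -/
def IsIConn (G : SimpleGraph V) (l : ℕ) (X : ℕ → Set V) (I : Set V) : Prop :=
  ∀ i < l, ∀ C : Set V, IsCompIn G {v | ∃ j ≤ i, v ∈ X j} C → (C ∩ I).Nonempty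

section Components

variable {G : SimpleGraph V} {U C D T : Set V}

lemma subset_of_connected_induce (hC : (G.induce C).Connected) (hCT : (C ∩ T).Nonempty)
    (hT : ∀ u ∈ C, ∀ w ∈ C, G.Adj u w → u ∈ T → w ∈ T) : C ⊆ T := by
  obtain ⟨v, hvC, hvT⟩ := hCT
  intro w hwC
  by_contra hwT
  obtain ⟨p⟩ := hC.preconnected ⟨v, hvC⟩ ⟨w, hwC⟩
  obtain ⟨d, -, hfst, hsnd⟩ := p.exists_boundary_dart (Subtype.val ⁻¹' T) hvT hwT
  exact hsnd (hT _ d.fst.2 _ d.snd.2 d.adj hfst)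

lemma IsCompIn.subset_of_inter_nonempty (hC : IsCompIn G U C) (hD : IsCompIn G U D)
    (h : (C ∩ D).Nonempty) : C ⊆ D := by
  obtain ⟨-, hCU, hconn, -⟩ := hC
  obtain ⟨-, -, -, hclosed⟩ := hD
  exact subset_of_connected_induce hconn h fun u _ w hw huw hu => hclosed u hu w (hCU hw) huw

lemma IsCompIn.pairwiseDisjoint : {C | IsCompIn G U C}.PairwiseDisjoint id := by
  intro C hC D hD hne
  refine Set.disjoint_iff_inter_eq_empty.2 (Set.not_nonempty_iff_eq_empty.1 fun h => hne ?_)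
  exact (hC.subset_of_inter_nonempty hD h).antisymm
    (hD.subset_of_inter_nonempty hC (Set.inter_comm C D ▸ h))

end Components

section PathDecomposition

variable {G : SimpleGraph V} {l : ℕ} {X : ℕ → Set V} {C S : Set V} {m : ℕ}

lemma bddAbove_supp : BddAbove (supp l X C) :=
  ⟨l, fun _ ht => ht.1.le⟩

namespace IsPathDecomp

lemma supp_nonempty (hP : IsPathDecomp G l X) (hC : C.Nonempty) : (supp l X C).Nonempty := by
  obtain ⟨v, hv⟩ := hC
  obtain ⟨i, hi, hvi⟩ := hP.1 v
  exact ⟨i, hi, v, hv, hvi⟩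

lemma firstIdx_mem_supp (hP : IsPathDecomp G l X) (hC : C.Nonempty) :
    firstIdx l X C ∈ supp l X C :=
  Nat.sInf_mem (hP.supp_nonempty hC)

lemma lastIdx_mem_supp (hP : IsPathDecomp G l X) (hC : C.Nonempty) :
    lastIdx l X C ∈ supp l X C :=
  Nat.sSup_mem (hP.supp_nonempty hC) bddAbove_supp

lemma exists_le_mem_of_adj (hP : IsPathDecomp G l X) {t : ℕ} {u w : V} (huw : G.Adj u w)
    (hut : u ∉ X t) (hu : ∃ i ≤ t, u ∈ X i) : ∃ j ≤ t, w ∈ X j := by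
  obtain ⟨-, hedge, hinterp⟩ := hP
  obtain ⟨i, hit, hui⟩ := hu
  obtain ⟨j, hjl, huj, hwj⟩ := hedge u w huw
  have hjt : j ≤ t := le_of_not_ge fun htj => hut (hinterp i t j hit htj hjl ⟨hui, huj⟩)
  exact ⟨j, hjt, hwj⟩

lemma ordConnected_supp (hP : IsPathDecomp G l X) (hC : (G.induce C).Connected) :
    (supp l X C).OrdConnected := by
  refine ⟨fun a ⟨_, ha⟩ b ⟨hbl, hb⟩ t ⟨hat, htb⟩ => ⟨htb.trans_lt hbl, ?_⟩⟩
  by_contra hne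
  have hmiss : ∀ v ∈ C, v ∉ X t := fun v hv hvt => hne ⟨v, hv, hvt⟩
  have hbefore : C ⊆ {v | ∃ i ≤ t, v ∈ X i} :=
    subset_of_connected_induce hC (ha.mono fun _ hv => ⟨hv.1, a, hat, hv.2⟩)
      fun u hu _ _ huw => hP.exists_le_mem_of_adj huw (hmiss u hu)
  obtain ⟨y, hyC, hyb⟩ := hb
  obtain ⟨i, hit, hyi⟩ := hbefore hyC
  exact hmiss y hyC (hP.2.2 i t b hit htb hbl ⟨hyi, hyb⟩)

lemma supp_eq_Icc (hP : IsPathDecomp G l X) (hC : (G.induce C).Connected) :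
    supp l X C = Set.Icc (firstIdx l X C) (lastIdx l X C) := by
  have hne : C.Nonempty := Set.nonempty_coe_sort.1 hC.nonempty
  refine Set.Subset.antisymm (fun t ht => ⟨Nat.sInf_le ht, le_csSup bddAbove_supp ht⟩) ?_
  exact (hP.ordConnected_supp hC).out (hP.firstIdx_mem_supp hne) (hP.lastIdx_mem_supp hne)

lemma lt_lastIdx (hP : IsPathDecomp G l X) (hC : C.Nonempty) (hml : m < l)
    (hfirst : S ⊆ X (firstIdx l X C)) (hlast : ¬ S ⊆ X (lastIdx l X C)) (hm : S ⊆ X m) :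
    m < lastIdx l X C := by
  have hab : firstIdx l X C ≤ lastIdx l X C :=
    le_csSup bddAbove_supp (hP.firstIdx_mem_supp hC)
  by_contra! hbm
  exact hlast ((Set.subset_inter hfirst hm).trans (hP.2.2 _ _ _ hab hbm hml))

lemma exists_forall_inter_nonempty (hP : IsPathDecomp G l X) {F : Set (Set V)} (hF : F.Nonempty)
    (hconn : ∀ C ∈ F, (G.induce C).Connected) (hfirst : ∀ C ∈ F, S ⊆ X (firstIdx l X C))
    (hlast : ∀ C ∈ F, ¬ S ⊆ X (lastIdx l X C)) :
    ∃ m < l, ∀ C ∈ F, (C ∩ X m).Nonempty := by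
  have hne : ∀ C ∈ F, C.Nonempty := fun C hC => Set.nonempty_coe_sort.1 (hconn C hC).nonempty
  have hlt : ∀ C ∈ F, firstIdx l X C < l := fun C hC => (hP.firstIdx_mem_supp (hne C hC)).1
  have hfin : (firstIdx l X '' F).Finite :=
    (Set.finite_Iio l).subset (Set.image_subset_iff.2 hlt)
  obtain ⟨M, hM, hmax⟩ := Set.Finite.exists_maximalFor' (firstIdx l X) F hfin hF
  refine ⟨firstIdx l X M, hlt M hM, fun C hC => ?_⟩
  have ham : firstIdx l X C ≤ firstIdx l X M := (le_total _ _).elim id (hmax hC)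
  have hmb : firstIdx l X M < lastIdx l X C :=
    hP.lt_lastIdx (hne C hC) (hlt M hM) (hfirst C hC) (hlast C hC) (hfirst M hM)
  have hmem : firstIdx l X M ∈ supp l X C := hP.supp_eq_Icc (hconn C hC) ▸ ⟨ham, hmb.le⟩
  exact hmem.2

end IsPathDecomp

end PathDecomposition

section Counting

open scoped Cardinal

lemma mk_le_mk_of_pairwiseDisjoint {F : Set (Set V)} {T : Set V} (hF : F.PairwiseDisjoint id)
    (hT : ∀ C ∈ F, (C ∩ T).Nonempty) : #F ≤ #T := by
  choose f hfC hfT using fun C : F => hT C C.2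
  refine Cardinal.mk_le_of_injective (f := fun C => (⟨f C, hfT C⟩ : T)) fun C D hCD => ?_
  have hfCD : f C = f D := congrArg Subtype.val hCD
  have hfD : f C ∈ (D : Set V) := hfCD ▸ hfC D
  exact Subtype.ext (hF.elim C.2 D.2 (Set.not_disjoint_iff.2 ⟨f C, hfC C, hfD⟩))

lemma mk_le_natCast_iff_ncard_le {s : Set V} (hs : s.Finite) {n : ℕ} : #s ≤ n ↔ s.ncard ≤ n := by
  have := hs.to_subtype
  rw [← Nat.cast_card, Nat.cast_le, Nat.card_coe_set_eq]

theorem stmt15_general {G : SimpleGraph V} {l : ℕ} {X : ℕ → Set V} (hP : IsPathDecomp G l X)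
    {κ : Cardinal} (hκ : ∀ i < l, #(X i) ≤ κ) {S : Set V} {F : Set (Set V)}
    (hconn : ∀ C ∈ F, (G.induce C).Connected) (hdisj : F.PairwiseDisjoint id)
    (hfirst : ∀ C ∈ F, S ⊆ X (firstIdx l X C)) (hlast : ∀ C ∈ F, ¬ S ⊆ X (lastIdx l X C)) :
    #F ≤ κ := by
  rcases F.eq_empty_or_nonempty with rfl | hF
  · simp
  obtain ⟨m, hml, hmeet⟩ := hP.exists_forall_inter_nonempty hF hconn hfirst hlast
  exact (mk_le_mk_of_pairwiseDisjoint hdisj hmeet).trans (hκ m hml)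

end Counting

/-- for a path decomposition with bags of size at most `k` and a
nonempty `S`, at most `k` `S`-branches `H` satisfy `S ⊆ X (a H)` and
`S ⊄ X (b H)`. -/
theorem stmt15 [Fintype V] (k : ℕ) (hk : 1 ≤ k) (G : SimpleGraph V) (l : ℕ)
    (X : ℕ → Set V) (hP : IsPathDecomp G l X) (hw : ∀ i < l, (X i).ncard ≤ k)
    (S : Set V) (hS : S.Nonempty) :
    {C : Set V | IsBranch G S C ∧ S ⊆ X (firstIdx l X C) ∧
      ¬ S ⊆ X (lastIdx l X C)}.ncard ≤ k := by
  exact (mk_le_natCast_iff_ncard_le (Set.toFinite _)).1 <| stmt15_general hP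
    (fun i hi => (mk_le_natCast_iff_ncard_le (Set.toFinite _)).2 (hw i hi))
    (fun C hC => hC.1.1.2.2.1) (IsCompIn.pairwiseDisjoint.subset fun C hC => hC.1.1)
    (fun C hC => hC.2.1) (fun C hC => hC.2.2)
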